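/- Let δ > 0 and let u ∈ C²(S² ∩ B_δ(S) \ {S}) be a (−1)-homogeneous axisymmetric solution of the stationary Navier–Stokes equations, and let τ := lim_{x∈S², x→S} |x'| u_θ(x) (which exists and is finite). If τ < 2 and τ ≠ 0, then both lim_{x∈S², x→S} |x'| u_φ(x) and lim_{x∈S², x→S} |x'|^{max{τ,0}} u_r(x) exist and are finite. -/

import Mathlib

noncomputable section

open Real Filter MeasureTheory Metric Topology
open scoped ENNReal InnerProductSpace

abbrev V3 := EuclideanSpace ℝ (Fin 3)
abbrev V2 := EuclideanSpace ℝ (Fin 2)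

/-- standard basis vector in `ℝ³` -/
def e3 (j : Fin 3) : V3 := EuclideanSpace.single j 1

/-- partial derivative `∂_j f` -/
def pd (j : Fin 3) (f : V3 → ℝ) (x : V3) : ℝ := fderiv ℝ f x (e3 j)

/-- Laplacian on `ℝ³` -/
def lap3 (f : V3 → ℝ) (x : V3) : ℝ := ∑ j, pd j (fun y => pd j f y) x

/-- stationary Navier–Stokes equations `-Δu + (u·∇)u + ∇p = 0`, `div u = 0` at `x` -/
def NSEq (u : V3 → V3) (p : V3 → ℝ) (x : V3) : Prop :=
  (∀ i, - lap3 (fun z => u z i) x + (∑ j, u x j * pd j (fun z => u z i) x) + pd i p x = 0)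
  ∧ (∑ j, pd j (fun z => u z j) x) = 0

/-- stationary Euler equations `(u·∇)u + ∇p = 0`, `div u = 0` at `x` -/
def EulerEq (u : V3 → V3) (p : V3 → ℝ) (x : V3) : Prop :=
  (∀ i, (∑ j, u x j * pd j (fun z => u z i) x) + pd i p x = 0)
  ∧ (∑ j, pd j (fun z => u z j) x) = 0

/-- south pole -/
def S3 : V3 := EuclideanSpace.single 2 (-1)
/-- north pole -/
def N3 : V3 := EuclideanSpace.single 2 1

/-- the unit sphere `S²` -/
def sphere2 : Set V3 := Metric.sphere (0 : V3) 1

/-- the open cone over a subset of the unit sphere -/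
def cone3 (Ω : Set V3) : Set V3 := {x : V3 | x ≠ 0 ∧ (‖x‖⁻¹ • x) ∈ Ω}

/-- `|x'| = √(x₁² + x₂²)` -/
def rho (x : V3) : ℝ := Real.sqrt ((x 0) ^ 2 + (x 1) ^ 2)

/-- the `x₃`-axis `{x' = 0}` -/
def axis3 : Set V3 := {x : V3 | x 0 = 0 ∧ x 1 = 0}

/-- `Ω_{a,b,R} = {a < x₃ < b, |x'| < R}` -/
def OmegaR (a b R : ℝ) : Set V3 := {x : V3 | a < x 2 ∧ x 2 < b ∧ rho x < R}

/-- build a point of `ℝ³` from `x' ∈ ℝ²` and `x₃ ∈ ℝ` -/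
def emb (y : V2) (t : ℝ) : V3 := (EuclideanSpace.equiv (Fin 3) ℝ).symm ![y 0, y 1, t]

/-- spherical component `u_r = u · e_r` -/
def uRc (u : V3 → V3) (x : V3) : ℝ := (u x 0 * x 0 + u x 1 * x 1 + u x 2 * x 2) / ‖x‖

/-- spherical component `u_θ = u · e_θ` -/
def uTc (u : V3 → V3) (x : V3) : ℝ :=
  (u x 0 * x 0 * x 2 + u x 1 * x 1 * x 2) / (‖x‖ * rho x) - u x 2 * rho x / ‖x‖

/-- spherical component `u_φ = u · e_φ` -/
def uPc (u : V3 → V3) (x : V3) : ℝ := (-(u x 0) * x 1 + u x 1 * x 0) / rho x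

/-- axisymmetry on a set: the spherical components are independent of the meridian angle -/
def AxisymOn (u : V3 → V3) (Ω : Set V3) : Prop :=
  ∀ x ∈ Ω, ∀ y ∈ Ω, ‖x‖ = ‖y‖ → x 2 = y 2 →
    uRc u x = uRc u y ∧ uTc u x = uTc u y ∧ uPc u x = uPc u y

/-- spherical frame vector `e_r` -/
def eRv (x : V3) : V3 := ‖x‖⁻¹ • x

/-- spherical frame vector `e_θ` -/
def eThv (x : V3) : V3 := (EuclideanSpace.equiv (Fin 3) ℝ).symm
  ![x 2 * x 0 / (‖x‖ * rho x), x 2 * x 1 / (‖x‖ * rho x), -(rho x) / ‖x‖]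

/-- spherical frame vector `e_φ` -/
def ePhv (x : V3) : V3 := (EuclideanSpace.equiv (Fin 3) ℝ).symm ![-(x 1) / rho x, x 0 / rho x, 0]

/-- the spherical cap `S² ∩ B_δ(S) \ {S}` -/
def NSCap (δ : ℝ) : Set V3 := (sphere2 ∩ Metric.ball S3 δ) \ {S3}

/-- the spherical cap `S² ∩ B_δ(S)` -/
def NSCapFull (δ : ℝ) : Set V3 := sphere2 ∩ Metric.ball S3 δ

lemma ev_small {P : ℝ → Prop} (h : ∀ᶠ t in 𝓝[>] (0:ℝ), P t) :
    ∃ ε : ℝ, 0 < ε ∧ ε ≤ 1 ∧ ∀ t, 0 < t → t < ε → P t := by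
  rw [eventually_nhdsWithin_iff, Metric.eventually_nhds_iff] at h
  obtain ⟨e, he, h⟩ := h
  refine ⟨min e 1, by positivity, min_le_right _ _, fun t h0 h1 => h ?_ h0⟩
  rw [Real.dist_eq, sub_zero, abs_of_pos h0]
  exact lt_of_lt_of_le h1 (min_le_left _ _)

lemma ev_of {P : ℝ → Prop} {ε : ℝ} (h0 : 0 < ε) (h : ∀ t, 0 < t → t < ε → P t) :
    ∀ᶠ t in 𝓝[>] (0:ℝ), P t := by
  filter_upwards [Ioo_mem_nhdsGT h0] with t ht using h t ht.1 ht.2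

lemma ev_trig : ∀ᶠ t in 𝓝[>] (0:ℝ), 0 < sin t ∧ 1/2 ≤ cos t ∧ sin t ≤ 1 ∧ cos t ≤ 1 := by
  refine ev_of (ε := 1) one_pos fun t h0 h1 => ⟨sin_pos_of_pos_of_lt_pi h0 ?_, ?_, sin_le_one _, cos_le_one _⟩
  · linarith [pi_gt_three]
  · have := one_sub_sq_div_two_le_cos (x := t)
    nlinarith

lemma hasDerivAt_sin_rpow {t : ℝ} (hs : 0 < sin t) (α : ℝ) :
    HasDerivAt (fun t => sin t ^ α) (α * sin t ^ (α - 1) * cos t) t := by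
  have := (hasDerivAt_sin t).rpow_const (p := α) (Or.inl hs.ne')
  convert this using 1; ring

lemma tendsto_sin_rpow {α : ℝ} (hα : 0 < α) :
    Tendsto (fun t => sin t ^ α) (𝓝[>] (0:ℝ)) (𝓝 0) := by
  have h : ContinuousAt (fun t => sin t ^ α) 0 :=
    (continuous_sin.continuousAt).rpow_const (Or.inr hα.le)
  have := h.tendsto.mono_left (nhdsWithin_le_nhds (s := Set.Ioi 0))
  simpa [zero_rpow hα.ne'] using this

lemma mono_of {z z' : ℝ → ℝ} {ε : ℝ} (hz : ∀ t, 0 < t → t < ε → HasDerivAt z (z' t) t)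
    (h : ∀ t, 0 < t → t < ε → 0 ≤ z' t) : ∀ x y, 0 < x → x ≤ y → y < ε → z x ≤ z y := by
  have : MonotoneOn z (Set.Ioo 0 ε) := by
    apply monotoneOn_of_deriv_nonneg (convex_Ioo _ _)
    · exact fun t ht => (hz t ht.1 ht.2).continuousAt.continuousWithinAt
    · rw [interior_Ioo]; exact fun t ht => (hz t ht.1 ht.2).differentiableAt.differentiableWithinAt
    · rw [interior_Ioo]; exact fun t ht => by rw [(hz t ht.1 ht.2).deriv]; exact h t ht.1 ht.2
  exact fun x y h0 h1 h2 => this ⟨h0, by linarith⟩ ⟨by linarith, h2⟩ h1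

/-- integrable derivative: limit with rate -/
lemma L2 {y y' : ℝ → ℝ} {C α : ℝ} (hα : 0 < α) 
    (hy : ∀ᶠ t in 𝓝[>] (0:ℝ), HasDerivAt y (y' t) t)
    (hb : ∀ᶠ t in 𝓝[>] (0:ℝ), |y' t| ≤ C * sin t ^ (α - 1)) :
    ∃ L D : ℝ, Tendsto y (𝓝[>] 0) (𝓝 L) ∧ ∀ᶠ t in 𝓝[>] (0:ℝ), |y t - L| ≤ D * sin t ^ α := by
  obtain ⟨ε, h0, h1, H⟩ := ev_small (hy.and (hb.and ev_trig))
  have hC : 0 ≤ C := by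
    obtain ⟨-, h, hs, -⟩ := H (ε/2) (by linarith) (by linarith)
    by_contra hC
    have := rpow_pos_of_pos hs (α - 1)
    nlinarith [abs_nonneg (y' (ε/2))]
  set D := 2 * C / α with hD
  have hDα : D * α = 2 * C := by rw [hD]; field_simp
  have hm1 : ∀ x z, 0 < x → x ≤ z → z < ε → y x + D * sin x ^ α ≤ y z + D * sin z ^ α := by
    refine mono_of (z := fun t => y t + D * sin t ^ α) (z' := fun t => y' t + D * (α * sin t ^ (α - 1) * cos t)) ?_ ?_
    · exact fun t a b => (H t a b).1.add ((hasDerivAt_sin_rpow (H t a b).2.2.1 α).const_mul D)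
    · intro t a b
      obtain ⟨-, h, hs, hc, -⟩ := H t a b
      have := rpow_pos_of_pos hs (α - 1)
      have h2 := neg_abs_le (y' t)
      have : D * (α * sin t ^ (α - 1) * cos t) = 2 * C * cos t * sin t ^ (α - 1) := by rw [← hDα]; ring
      rw [this]
      have : C * sin t ^ (α - 1) ≤ 2 * C * cos t * sin t ^ (α - 1) := by
        gcongr; nlinarith
      linarith
  have hm2 : ∀ x z, 0 < x → x ≤ z → z < ε → - y x + D * sin x ^ α ≤ - y z + D * sin z ^ α := by
    refine mono_of (z := fun t => - y t + D * sin t ^ α) (z' := fun t => - y' t + D * (α * sin t ^ (α - 1) * cos t)) ?_ ?_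
    · exact fun t a b => (H t a b).1.neg.add ((hasDerivAt_sin_rpow (H t a b).2.2.1 α).const_mul D)
    · intro t a b
      obtain ⟨-, h, hs, hc, -⟩ := H t a b
      have := rpow_pos_of_pos hs (α - 1)
      have h2 := le_abs_self (y' t)
      have : D * (α * sin t ^ (α - 1) * cos t) = 2 * C * cos t * sin t ^ (α - 1) := by rw [← hDα]; ring
      rw [this]
      have : C * sin t ^ (α - 1) ≤ 2 * C * cos t * sin t ^ (α - 1) := by
        gcongr; nlinarith
      linarith
  have hD0 : 0 ≤ D := by positivity
  have hbd : BddBelow ((fun t => y t + D * sin t ^ α) '' Set.Ioo 0 ε) := by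
    refine ⟨min (y (ε/2) - D * sin (ε/2) ^ α) (y (ε/2) + D * sin (ε/2) ^ α), ?_⟩
    rintro _ ⟨t, ht, rfl⟩
    simp only
    have hs := (H t ht.1 ht.2).2.2.1
    have := rpow_pos_of_pos hs α
    rcases le_total t (ε/2) with h | h
    · have := hm2 t (ε/2) ht.1 h (by linarith)
      have : 0 ≤ D * sin t ^ α := by positivity
      exact (min_le_left _ _).trans (by linarith)
    · exact (min_le_right _ _).trans (hm1 (ε/2) t (by linarith) h ht.2)
  have hlim := MonotoneOn.tendsto_nhdsWithin_Ioo_right (f := fun t => y t + D * sin t ^ α) (x := 0) (y := ε)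
    ⟨ε/2, by constructor <;> linarith⟩ (fun x hx z hz hxz => hm1 x z hx.1 hxz hz.2) hbd
  have hlim2 : Tendsto (fun t => D * sin t ^ α) (𝓝[>] (0:ℝ)) (𝓝 0) := by
    simpa using (tendsto_sin_rpow hα).const_mul D
  have hy0 : Tendsto y (𝓝[>] 0) (𝓝 (sInf ((fun t => y t + D * sin t ^ α) '' Set.Ioo 0 ε))) := by
    simpa using hlim.sub hlim2
  refine ⟨_, D, hy0, ev_of h0 fun t ht0 ht1 => ?_⟩
  have ha : Tendsto (fun x => y x + D * sin x ^ α) (𝓝[>] 0) (𝓝 _) := hlim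
  have hb' := hy0.neg.add hlim2
  have e1 := le_of_tendsto ha (ev_of ht0 fun x hx hxt => hm1 x t hx hxt.le ht1)
  have e2 := le_of_tendsto hb' (ev_of ht0 fun x hx hxt => hm2 x t hx hxt.le ht1)
  rw [abs_le]; constructor <;> linarith

lemma L3 {y y' : ℝ → ℝ} {C κ : ℝ} (hκ : 0 < κ) 
    (hy : ∀ᶠ t in 𝓝[>] (0:ℝ), HasDerivAt y (y' t) t)
    (hb : ∀ᶠ t in 𝓝[>] (0:ℝ), |y' t| ≤ C * sin t ^ (-κ - 1)) :
    ∃ D : ℝ, ∀ᶠ t in 𝓝[>] (0:ℝ), |y t| ≤ D * sin t ^ (-κ) := by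
  obtain ⟨ε, h0, h1, H⟩ := ev_small (hy.and (hb.and ev_trig))
  have hC : 0 ≤ C := by
    obtain ⟨-, h, hs, -⟩ := H (ε/2) (by linarith) (by linarith)
    by_contra hC
    have := rpow_pos_of_pos hs (-κ - 1)
    nlinarith [abs_nonneg (y' (ε/2))]
  set D := 2 * C / κ with hD
  have hDα : D * κ = 2 * C := by rw [hD]; field_simp
  have key : ∀ σ : ℝ, |σ| = 1 → ∀ x z, 0 < x → x ≤ z → z < ε → σ * y x - D * sin x ^ (-κ) ≤ σ * y z - D * sin z ^ (-κ) := by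
    intro σ hσ
    refine mono_of (z := fun t => σ * y t - D * sin t ^ (-κ)) (z' := fun t => σ * y' t - D * (-κ * sin t ^ (-κ - 1) * cos t)) ?_ ?_
    · exact fun t a b => ((H t a b).1.const_mul σ).sub ((hasDerivAt_sin_rpow (H t a b).2.2.1 _).const_mul D)
    · intro t a b
      obtain ⟨-, h, hs, hc, -⟩ := H t a b
      have := rpow_pos_of_pos hs (-κ - 1)
      have h2 := neg_abs_le (σ * y' t)
      rw [abs_mul, hσ, one_mul] at h2
      have : D * (-κ * sin t ^ (-κ - 1) * cos t) = - (2 * C * cos t * sin t ^ (-κ - 1)) := by rw [← hDα]; ring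
      rw [this]
      have : C * sin t ^ (-κ - 1) ≤ 2 * C * cos t * sin t ^ (-κ - 1) := by
        gcongr; nlinarith
      linarith
  have hD0 : 0 ≤ D := by positivity
  refine ⟨D + |y (ε/2)|, ev_of (half_pos h0) fun t ht0 ht1 => ?_⟩
  obtain ⟨-, -, hs, hc, hs1, -⟩ := H t ht0 (by linarith)
  have g1 : 1 ≤ sin t ^ (-κ) := one_le_rpow_of_pos_of_le_one_of_nonpos hs hs1 (by linarith)
  have k1 := key 1 (by simp) t (ε/2) ht0 ht1.le (by linarith)
  have k2 := key (-1) (by simp) t (ε/2) ht0 ht1.le (by linarith)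
  have := rpow_pos_of_pos (H (ε/2) (by linarith) (by linarith)).2.2.1 (-κ)
  have : 0 ≤ D * sin (ε/2) ^ (-κ) := by positivity
  have : |y (ε/2)| ≤ |y (ε/2)| * sin t ^ (-κ) := le_mul_of_one_le_right (abs_nonneg _) g1
  have := le_abs_self (y (ε/2))
  have := neg_abs_le (y (ε/2))
  rw [abs_le]; constructor <;> linarith

/-- Gronwall growth bound -/
lemma L1 {y y' β e : ℝ → ℝ} {β0 κ M : ℝ} (hκ : 0 < κ) (hκ' : -β0 < κ)
    (hβ : Tendsto β (𝓝[>] 0) (𝓝 β0))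
    (hy : ∀ᶠ t in 𝓝[>] (0:ℝ), HasDerivAt y (y' t) t)
    (heq : ∀ᶠ t in 𝓝[>] (0:ℝ), sin t * y' t = β t * y t + e t)
    (he : ∀ᶠ t in 𝓝[>] (0:ℝ), |e t| ≤ M) :
    ∃ D : ℝ, ∀ᶠ t in 𝓝[>] (0:ℝ), |y t| ≤ D * sin t ^ (-κ) := by
  obtain ⟨k, hk1, hk2⟩ := exists_between (max_lt hκ hκ')
  obtain ⟨hk0, hk1⟩ := max_lt_iff.1 hk1
  set d := κ - k with hd
  have hd0 : 0 < d := by linarith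
  have hβ' : ∀ᶠ t in 𝓝[>] (0:ℝ), -k < β t := hβ.eventually_const_lt (by linarith)
  have hcos : ∀ᶠ t in 𝓝[>] (0:ℝ), (k + d / 2) / κ < cos t := by
    have : Tendsto cos (𝓝[>] 0) (𝓝 1) := by
      have := continuous_cos.tendsto 0
      rw [cos_zero] at this
      exact this.mono_left nhdsWithin_le_nhds
    refine this.eventually_const_lt ?_
    rw [div_lt_one hκ]; linarith
  obtain ⟨ε, h0, h1, H⟩ := ev_small (hy.and (heq.and (he.and (hβ'.and (hcos.and ev_trig)))))
  -- z = y^2 + N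
  set N := M^2 / d^2 with hN
  have hNd : N * d^2 = M^2 := by rw [hN]; field_simp
  have hN0 : 0 ≤ N := by positivity
  have hm := mono_of (ε := ε) (z := fun t => (y t ^ 2 + N) * sin t ^ (2 * κ))
    (z' := fun t => (2 * y t * y' t) * sin t ^ (2 * κ) + (y t ^ 2 + N) * (2 * κ * sin t ^ (2 * κ - 1) * cos t)) ?_ ?_
  · obtain ⟨-, -, -, -, -, hs1, -⟩ := H (ε/2) (by linarith) (by linarith)
    set Z := (y (ε/2) ^ 2 + N) * sin (ε/2) ^ (2 * κ) with hZ
    refine ⟨√Z, ev_of (half_pos h0) fun t ht0 ht1 => ?_⟩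
    obtain ⟨-, -, -, -, -, hs, -⟩ := H t ht0 (by linarith)
    have := hm t (ε/2) ht0 ht1.le (by linarith)
    have hp := rpow_pos_of_pos hs κ
    simp only [← hZ] at this
    have e1 : sin t ^ (2 * κ) = (sin t ^ κ)^2 := by
      rw [← rpow_natCast, ← rpow_mul hs.le]; congr 1; push_cast; ring
    rw [e1] at this
    have : (|y t| * sin t ^ κ) ≤ √Z := by
      apply le_sqrt_of_sq_le
      rw [mul_pow, sq_abs]; nlinarith [mul_nonneg hN0 (sq_nonneg (sin t ^ κ))]
    rw [rpow_neg hs.le, ← div_eq_mul_inv, le_div_iff₀ hp]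
    exact this
  · intro t ht0 ht1
    obtain ⟨a, -, -, -, -, hs, -⟩ := H t ht0 ht1
    have := ((a.pow 2).add_const N).mul (hasDerivAt_sin_rpow hs (2 * κ))
    exact this.congr_deriv (by simp)
  · intro t ht0 ht1
    obtain ⟨-, e1, e2, e3, e4, hs, -⟩ := H t ht0 ht1
    have e5 : sin t ^ (2 * κ) = sin t ^ (2 * κ - 1) * sin t := by
      rw [← rpow_add_one hs.ne']; congr 1; ring
    have hp := rpow_pos_of_pos hs (2 * κ - 1)
    rw [e5]
    have : (2 * y t * y' t) * (sin t ^ (2 * κ - 1) * sin t) + (y t ^ 2 + N) * (2 * κ * sin t ^ (2 * κ - 1) * cos t)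
      = sin t ^ (2 * κ - 1) * (2 * y t * (β t * y t + e t) + (y t ^ 2 + N) * (2 * (κ * cos t))) := by
      rw [← e1]; ring
    rw [this]
    apply mul_nonneg hp.le
    have e6 : k + d / 2 ≤ κ * cos t := by
      rw [div_lt_iff₀ hκ] at e4; linarith
    have e7 : (y t ^ 2 + N) * (2 * (k + d/2)) ≤ (y t ^ 2 + N) * (2 * (κ * cos t)) := by gcongr
    have e8 : - k * y t ^ 2 ≤ β t * y t ^ 2 := by gcongr
    have e9 : e t ^ 2 ≤ M ^ 2 := by
      rw [← sq_abs]; gcongr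
    have e10 : 0 ≤ d * (2 * y t * e t + (y t ^ 2 + N) * d) := by
      nlinarith [sq_nonneg (d * y t + e t)]
    have e11 := nonneg_of_mul_nonneg_right e10 hd0
    nlinarith [mul_nonneg hN0 hk0.le]

/-- unstable node: limit -/
lemma L4 {y y' β e : ℝ → ℝ} {σ h : ℝ} (hσ : 0 < σ) 
    (hβ : Tendsto β (𝓝[>] 0) (𝓝 σ))
    (hy : ∀ᶠ t in 𝓝[>] (0:ℝ), HasDerivAt y (y' t) t)
    (heq : ∀ᶠ t in 𝓝[>] (0:ℝ), sin t * y' t = β t * y t + e t)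
    (he : Tendsto e (𝓝[>] 0) (𝓝 h)) :
    Tendsto y (𝓝[>] 0) (𝓝 (-h/σ)) := by
  -- w = y + h/σ
  have hE : Tendsto (fun t => e t - β t * (h/σ)) (𝓝[>] 0) (𝓝 0) := by
    have := he.sub (hβ.mul_const (h/σ))
    rwa [mul_div_cancel₀ _ hσ.ne', sub_self] at this
  rw [Metric.tendsto_nhds]
  intro η0 hη0
  set η := η0 / 2 with hη
  have hη1 : 0 < η := by positivity
  have hE' : ∀ᶠ t in 𝓝[>] (0:ℝ), |e t - β t * (h/σ)| < σ * η / 4 := by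
    have := (Metric.tendsto_nhds.1 hE) (σ * η / 4) (by positivity)
    simpa [Real.dist_eq] using this
  have hβ' : ∀ᶠ t in 𝓝[>] (0:ℝ), σ / 2 < β t := hβ.eventually_const_lt (by linarith)
  obtain ⟨ε, h0, h1, H⟩ := ev_small (hy.and (heq.and (hE'.and (hβ'.and ev_trig))))
  set k := σ / 2 with hk
  have hm := mono_of (ε := ε) (z := fun t => ((y t + h/σ) ^ 2 - η^2) * sin t ^ (-k))
    (z' := fun t => (2 * (y t + h/σ) * y' t) * sin t ^ (-k) + ((y t + h/σ) ^ 2 - η^2) * (-k * sin t ^ (-k - 1) * cos t)) ?_ ?_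
  · set Z := ((y (ε/2) + h/σ) ^ 2 - η^2) * sin (ε/2) ^ (-k) with hZ
    have hlim : Tendsto (fun t => Z * sin t ^ k) (𝓝[>] (0:ℝ)) (𝓝 0) := by
      simpa using (tendsto_sin_rpow (α := k) (by positivity)).const_mul Z
    have hl' := hlim.eventually_lt_const (u := η^2) (by positivity)
    filter_upwards [hl', ev_of (half_pos h0) fun t a b => And.intro a b] with t ht ht'
    obtain ⟨-, -, -, -, hs, -⟩ := H t ht'.1 (by linarith [ht'.2])
    have := hm t (ε/2) ht'.1 ht'.2.le (by linarith)
    simp only [← hZ] at this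
    have hp := rpow_pos_of_pos hs k
    rw [rpow_neg hs.le, ← div_eq_mul_inv, div_le_iff₀ hp] at this
    have h3 : (y t + h/σ)^2 < η0^2 := by
      have : η0 = 2 * η := by rw [hη]; ring
      rw [this]; nlinarith
    have := abs_lt_of_sq_lt_sq h3 hη0.le
    rw [Real.dist_eq]
    rwa [neg_div, sub_neg_eq_add]
  · intro t ht0 ht1
    obtain ⟨a, -, -, -, hs, -⟩ := H t ht0 ht1
    have := (((a.add_const (h/σ)).pow 2).sub_const (η^2)).mul (hasDerivAt_sin_rpow hs (-k))
    exact this.congr_deriv (by simp)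
  · intro t ht0 ht1
    obtain ⟨-, e1, e2, e3, hs, hc, -, hc1⟩ := H t ht0 ht1
    set w := y t + h / σ with hw
    have e5 : sin t ^ (-k) = sin t ^ (-k - 1) * sin t := by
      rw [← rpow_add_one hs.ne']; congr 1; ring
    have hp := rpow_pos_of_pos hs (-k - 1)
    rw [e5]
    have : (2 * w * y' t) * (sin t ^ (-k - 1) * sin t) + (w ^ 2 - η^2) * (-k * sin t ^ (-k - 1) * cos t)
      = sin t ^ (-k - 1) * (2 * w * (β t * w + (e t - β t * (h/σ))) - (w ^ 2 - η^2) * (k * cos t)) := by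
      have : β t * w + (e t - β t * (h/σ)) = sin t * y' t := by rw [e1, hw]; ring
      rw [this]; ring
    rw [this]
    apply mul_nonneg hp.le
    set E := e t - β t * (h/σ)
    have f1 : σ / 2 * w^2 ≤ β t * w^2 := by gcongr
    have f2 : |w * E| ≤ |w| * (σ * η / 4) := by rw [abs_mul]; gcongr
    have f3 := neg_abs_le (w * E)
    have f4 : |w| * η ≤ (w^2 + η^2)/2 := by nlinarith [sq_nonneg (|w| - η), sq_abs w]
    have f5 : w^2 * (k * cos t) ≤ w^2 * k := by
      gcongr; nlinarith
    have f6 : η^2 * (k * (1/2)) ≤ η^2 * (k * cos t) := by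
      gcongr
    have f7 : |w| * (σ * η / 4) ≤ σ / 4 * ((w^2 + η^2)/2) := by
      have := mul_le_mul_of_nonneg_left f4 (by positivity : 0 ≤ σ/4)
      linarith
    nlinarith [mul_nonneg hσ.le (sq_nonneg w)]

theorem ode_asymp (a a1 a2 b b1 b2 g g1 g2 P P1 : ℝ → ℝ) (τ ε : ℝ) (hε : 0 < ε) (hε1 : ε ≤ 1)
    (hτ2 : τ < 2) (hτ0 : τ ≠ 0)
    (ha : ∀ t, 0 < t → t < ε → HasDerivAt a (a1 t) t)
    (ha1 : ∀ t, 0 < t → t < ε → HasDerivAt a1 (a2 t) t)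
    (hb : ∀ t, 0 < t → t < ε → HasDerivAt b (b1 t) t)
    (hb1 : ∀ t, 0 < t → t < ε → HasDerivAt b1 (b2 t) t)
    (hg : ∀ t, 0 < t → t < ε → HasDerivAt g (g1 t) t)
    (hg1 : ∀ t, 0 < t → t < ε → HasDerivAt g1 (g2 t) t)
    (hP : ∀ t, 0 < t → t < ε → HasDerivAt P (P1 t) t)
    (hdiv : ∀ t, 0 < t → t < ε → sin t * a t + sin t * b1 t + cos t * b t = 0)
    (hR : ∀ t, 0 < t → t < ε → -(a2 t - 2 * b1 t - a t + cos t / sin t * (a1 t - b t)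
      - (a t * sin t + b t * cos t) / sin t) + (- a t ^ 2 + b t * (a1 t - b t) - g t ^ 2) - 2 * P t = 0)
    (hT : ∀ t, 0 < t → t < ε → -(b2 t + 2 * a1 t - b t + cos t / sin t * (b1 t + a t)
      - (a t * sin t + b t * cos t) * cos t / sin t ^ 2)
      + (- a t * b t + b t * (b1 t + a t) - g t ^ 2 * cos t / sin t) + P1 t = 0)
    (hΨ : ∀ t, 0 < t → t < ε → -(g2 t + cos t / sin t * g1 t - g t / sin t ^ 2)
      + (- a t * g t + b t * g1 t + g t * (a t * sin t + b t * cos t) / sin t) = 0)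
    (hB : Tendsto (fun t => sin t * b t) (𝓝[>] 0) (𝓝 (-τ))) :
    (∃ L, Tendsto (fun t => sin t * g t) (𝓝[>] 0) (𝓝 L)) ∧
    (∃ L, Tendsto (fun t => sin t ^ (max τ 0) * a t) (𝓝[>] 0) (𝓝 L)) := by
  have hs : ∀ t, 0 < t → t < ε → 0 < sin t := fun t h0 h1 =>
    sin_pos_of_pos_of_lt_pi h0 (by linarith [pi_gt_three])
  have hsc : ∀ t, sin t ^ 2 + cos t ^ 2 = 1 := sin_sq_add_cos_sq
  have hdiv' : ∀ t, 0 < t → t < ε → 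
      cos t * a t + sin t * a1 t + 2 * (cos t * b1 t) + sin t * b2 t - sin t * b t = 0 := by
    intro t h0 h1
    have d1 := (((hasDerivAt_sin t).mul (ha t h0 h1)).add ((hasDerivAt_sin t).mul (hb1 t h0 h1))).add
      ((hasDerivAt_cos t).mul (hb t h0 h1))
    have d2 : HasDerivAt (fun _ : ℝ => (0:ℝ)) 0 t := hasDerivAt_const _ _
    have d4 : (sin * a + sin * b1 + cos * b) =ᶠ[𝓝 t] (fun _ : ℝ => (0:ℝ)) := by
      filter_upwards [Ioo_mem_nhds h0 h1] with x hx using hdiv x hx.1 hx.2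
    have d3 := d2.congr_of_eventuallyEq d4
    have := d1.unique d3
    linear_combination this
  -- B
  have hB' : ∀ t, 0 < t → t < ε → HasDerivAt (fun t => sin t * b t) (- (sin t * a t)) t := by
    intro t h0 h1
    refine ((hasDerivAt_sin t).mul (hb t h0 h1)).congr_deriv ?_
    linear_combination hdiv t h0 h1
  -- H
  set H : ℝ → ℝ := fun t => g1 t + cos t / sin t * g t with hH
  have hΦ' : ∀ t, 0 < t → t < ε → HasDerivAt (fun t => sin t * g t) (sin t * H t) t := by
    intro t h0 h1
    refine ((hasDerivAt_sin t).mul (hg t h0 h1)).congr_deriv ?_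
    have := hs t h0 h1
    simp only [hH]; field_simp; ring
  set H1 : ℝ → ℝ := fun t => g2 t + cos t / sin t * g1 t - g t / sin t ^ 2 with hH1
  have hH' : ∀ t, 0 < t → t < ε → HasDerivAt H (H1 t) t := by
    intro t h0 h1
    have hst := hs t h0 h1
    refine ((hg1 t h0 h1).add (((hasDerivAt_cos t).div (hasDerivAt_sin t) hst.ne').mul (hg t h0 h1))).congr_deriv ?_
    simp only [hH1]
    have h3 : (-sin t * sin t - cos t * cos t) = -1 := by linarith [hsc t]
    rw [h3]; simp only [Pi.div_apply]; ring
  have hHeq : ∀ t, 0 < t → t < ε → sin t * H1 t = (sin t * b t) * H t + 0 := by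
    intro t h0 h1
    have hst := hs t h0 h1
    have := hΨ t h0 h1
    simp only [hH, hH1]
    have e : g t * (a t * sin t + b t * cos t) / sin t = g t * a t + b t * (cos t / sin t * g t) := by
      field_simp
    rw [e] at this
    linear_combination (- sin t) * this
  -- q
  set q : ℝ → ℝ := fun t => P t - a t + (b t ^ 2 + g t ^ 2) / 2 with hq
  have hq' : ∀ t, 0 < t → t < ε → HasDerivAt q (g t * H t) t := by
    intro t h0 h1
    have hst := hs t h0 h1
    refine (((hP t h0 h1).sub (ha t h0 h1)).add ((((hb t h0 h1).pow 2).add ((hg t h0 h1).pow 2)).div_const 2)).congr_deriv ?_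
    have h3 := hT t h0 h1
    have h4 := hdiv' t h0 h1
    have h5 := hsc t
    have h6 := hdiv t h0 h1
    simp only [hH]
    have e : P1 t - a1 t + b t * b1 t + g t * g1 t = g t * (g1 t + cos t / sin t * g t) := by
      field_simp at h3 ⊢
      refine mul_left_cancel₀ hst.ne' ?_
      linear_combination h3 + sin t * h4 - cos t * h6
    rw [← e]; simp; ring
  -- K
  set K : ℝ → ℝ := fun t => sin t * a1 t - (sin t * b t) * a t - 2 * (sin t * b t) with hK
  have hK' : ∀ t, 0 < t → t < ε → HasDerivAt K (- 2 * q t * sin t) t := by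
    intro t h0 h1
    have hst := hs t h0 h1
    refine ((((hasDerivAt_sin t).mul (ha1 t h0 h1)).sub ((hB' t h0 h1).mul (ha t h0 h1))).sub
      ((hB' t h0 h1).const_mul 2)).congr_deriv ?_
    have h3 := hR t h0 h1
    have h6 := hdiv t h0 h1
    simp only [hq]
    field_simp at h3
    linear_combination (-1) * h3 + (2) * h6
  have haeq : ∀ t, 0 < t → t < ε → sin t * a1 t = (sin t * b t) * a t + (2 * (sin t * b t) + K t) := by
    intro t h0 h1; simp only [hK]; ring
  -- choose κ
  obtain ⟨κ, hκ0, hκτ, hκ2, hκ3⟩ : ∃ κ : ℝ, 0 < κ ∧ τ < κ ∧ κ < 2 ∧ (0 < τ → κ < 1 + τ / 2) := by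
    rcases lt_or_gt_of_ne hτ0 with h | h
    · exact ⟨1, by norm_num, by linarith, by norm_num, fun h' => by linarith⟩
    · exact ⟨τ / 2 + (1 + τ/2)/2, by linarith, by linarith, by linarith, fun h' => by linarith⟩
  obtain ⟨DH, hDH⟩ := L1 (κ := κ) (M := 0) hκ0 (by linarith) hB (ev_of hε hH') (ev_of hε hHeq) (by simp)
  have mulpow : ∀ t, 0 < sin t → ∀ α β : ℝ, sin t ^ α * sin t ^ β = sin t ^ (α + β) := 
    fun t h α β => (rpow_add h α β).symm
  have mulpow1 : ∀ t, 0 < sin t → ∀ α : ℝ, sin t * sin t ^ α = sin t ^ (α + 1) := 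
    fun t h α => by rw [rpow_add_one h.ne', mul_comm]
  have hevs : ∀ᶠ t in 𝓝[>] (0:ℝ), 0 < sin t := ev_of hε hs
  obtain ⟨LΦ, DΦ, hLΦ, -⟩ := L2 (α := 2 - κ) (C := DH) (by linarith) (ev_of hε hΦ') (by
    filter_upwards [hDH, hevs] with t h1 h2
    rw [abs_mul, abs_of_pos h2, show (2 - κ - 1) = -κ + 1 by ring, ← mulpow1 t h2]
    nlinarith)
  refine ⟨⟨LΦ, hLΦ⟩, ?_⟩
  have hΦb : ∀ᶠ t in 𝓝[>] (0:ℝ), |sin t * g t| ≤ |LΦ| + 1 :=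
    (hLΦ.abs.eventually_lt_const (by linarith : |LΦ| < |LΦ| + 1)).mono fun _ h => h.le
  obtain ⟨Dq, hDq⟩ := L3 (κ := κ) (C := (|LΦ| + 1) * DH) hκ0 (ev_of hε hq') (by
    filter_upwards [hDH, hevs, hΦb] with t h1 h2 h3
    have h4 : sin t ^ (-κ) = sin t * sin t ^ (-κ - 1) := by rw [mulpow1 t h2]; congr 1; ring
    have h5 : |sin t * g t| * |H t| ≤ (|LΦ| + 1) * (DH * sin t ^ (-κ)) := by gcongr
    rw [h4, abs_mul, abs_of_pos h2] at h5
    rw [abs_mul]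
    refine le_of_mul_le_mul_left (?_ : sin t * _ ≤ sin t * _) h2
    linarith)
  obtain ⟨LK, DK, hLK, -⟩ := L2 (α := 2 - κ) (C := 2 * Dq) (by linarith) (ev_of hε hK') (by
    filter_upwards [hDq, hevs] with t h1 h2
    rw [abs_mul, abs_mul, abs_of_pos h2, show (2 - κ - 1) = -κ + 1 by ring, ← mulpow1 t h2]
    norm_num
    nlinarith)
  have hh : Tendsto (fun t => 2 * (sin t * b t) + K t) (𝓝[>] 0) (𝓝 (2 * (-τ) + LK)) :=
    (hB.const_mul 2).add hLK
  rcases lt_or_gt_of_ne hτ0 with hτ | hτ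
  · refine ⟨-(2 * (-τ) + LK) / (-τ), ?_⟩
    rw [max_eq_right hτ.le]
    simp only [rpow_zero, one_mul]
    exact L4 (by linarith) hB (ev_of hε ha) (ev_of hε haeq) hh
  · rw [max_eq_left hτ.le]
    set h0 := 2 * (-τ) + LK
    have hhb : ∀ᶠ t in 𝓝[>] (0:ℝ), |2 * (sin t * b t) + K t| ≤ |h0| + 1 :=
      (hh.abs.eventually_lt_const (by linarith : |h0| < |h0| + 1)).mono fun _ h => h.le
    obtain ⟨Da, hDa⟩ := L1 (κ := κ) hκ0 (by linarith) hB (ev_of hε ha) (ev_of hε haeq) hhb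
    obtain ⟨LB, DB, hLB, hDB⟩ := L2 (α := 2 - κ) (C := Da) (by linarith) (ev_of hε hB') (by
      filter_upwards [hDa, hevs] with t h1 h2
      rw [abs_neg, abs_mul, abs_of_pos h2, show (2 - κ - 1) = -κ + 1 by ring, ← mulpow1 t h2]
      nlinarith)
    obtain rfl : LB = -τ := tendsto_nhds_unique hLB hB
    set α := min τ (τ + 2 - 2 * κ) with hα
    have hκ4 := hκ3 hτ
    have hα0 : 0 < α := lt_min hτ (by linarith)
    have hy : ∀ᶠ t in 𝓝[>] (0:ℝ), HasDerivAt (fun t => sin t ^ τ * a t)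
        (τ * sin t ^ (τ - 1) * cos t * a t + sin t ^ τ * a1 t) t :=
      ev_of hε fun t h0 h1 => (hasDerivAt_sin_rpow (hs t h0 h1) τ).mul (ha t h0 h1)
    obtain ⟨L, -, hL, -⟩ := L2 (α := α) (C := (τ + DB) * Da + (|h0| + 1)) hα0 hy (by
      filter_upwards [hDa, hDB, hhb, ev_trig, ev_of hε haeq] with t h1 h2 h3 h4 h5
      obtain ⟨hst, hc, hs1, hc1⟩ := h4
      have e1 : sin t ^ τ = sin t * sin t ^ (τ - 1) := by rw [mulpow1 t hst]; congr 1; ring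
      have e2 : τ * sin t ^ (τ - 1) * cos t * a t + sin t ^ τ * a1 t =
          sin t ^ (τ - 1) * ((-(τ * (1 - cos t)) + (sin t * b t - -τ)) * a t + (2 * (sin t * b t) + K t)) := by
        rw [e1]
        linear_combination sin t ^ (τ - 1) * h5
      have p0 := rpow_pos_of_pos hst (τ - 1)
      have p1 := rpow_pos_of_pos hst (2 - κ)
      have p2 := rpow_pos_of_pos hst (-κ)
      have e3 : 1 - cos t ≤ sin t ^ (2 - κ) := by
        have : sin t ^ (2:ℝ) ≤ sin t ^ (2 - κ) := rpow_le_rpow_of_exponent_ge hst hs1 (by linarith)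
        rw [rpow_two] at this
        nlinarith [hsc t]
      have e4 : |-(τ * (1 - cos t)) + (sin t * b t - -τ)| ≤ (τ + DB) * sin t ^ (2 - κ) := by
        refine (abs_add_le _ _).trans ?_
        rw [abs_neg, abs_mul, abs_of_pos hτ, abs_of_nonneg (by linarith : 0 ≤ 1 - cos t)]
        nlinarith
      have e5 : |(-(τ * (1 - cos t)) + (sin t * b t - -τ)) * a t + (2 * (sin t * b t) + K t)|
          ≤ ((τ + DB) * sin t ^ (2 - κ)) * (Da * sin t ^ (-κ)) + (|h0| + 1) := by
        refine (abs_add_le _ _).trans ?_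
        rw [abs_mul]
        have : 0 ≤ (τ + DB) * sin t ^ (2 - κ) := (abs_nonneg _).trans e4
        gcongr
      rw [e2, abs_mul, abs_of_pos p0]
      have hDB0 : 0 ≤ τ + DB := nonneg_of_mul_nonneg_left ((abs_nonneg _).trans e4) p1
      have hDa0 : 0 ≤ Da := nonneg_of_mul_nonneg_left ((abs_nonneg _).trans h1) p2
      refine (mul_le_mul_of_nonneg_left e5 p0.le).trans ?_
      have e6 : sin t ^ (τ - 1) * (sin t ^ (2 - κ) * sin t ^ (-κ)) ≤ sin t ^ (α - 1) := by
        rw [mulpow t hst, mulpow t hst]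
        refine rpow_le_rpow_of_exponent_ge hst hs1 ?_
        have := min_le_right τ (τ + 2 - 2 * κ)
        linarith
      have e7 : sin t ^ (τ - 1) ≤ sin t ^ (α - 1) := by
        refine rpow_le_rpow_of_exponent_ge hst hs1 ?_
        have := min_le_left τ (τ + 2 - 2 * κ)
        linarith
      calc _ = ((τ + DB) * Da) * (sin t ^ (τ - 1) * (sin t ^ (2 - κ) * sin t ^ (-κ))) + (|h0| + 1) * sin t ^ (τ - 1) := by ring
        _ ≤ ((τ + DB) * Da) * sin t ^ (α - 1) + (|h0| + 1) * sin t ^ (α - 1) := by gcongr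
        _ = _ := by ring)
    exact ⟨L, hL⟩

def er (t φ : ℝ) : V3 := !₂[sin t * cos φ, sin t * sin φ, -cos t]
def et (t φ : ℝ) : V3 := !₂[cos t * cos φ, cos t * sin φ, sin t]
def ep (φ : ℝ) : V3 := !₂[-sin φ, cos φ, 0]
def en (φ : ℝ) : V3 := !₂[cos φ, sin φ, 0]

lemma hasDerivAt_V3 {f0 f1 f2 : ℝ → ℝ} {a b c s : ℝ} (h0 : HasDerivAt f0 a s) (h1 : HasDerivAt f1 b s)
    (h2 : HasDerivAt f2 c s) : HasDerivAt (fun s => (!₂[f0 s, f1 s, f2 s] : V3)) !₂[a, b, c] s := by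
  have h : HasDerivAt (fun s => (![f0 s, f1 s, f2 s] : Fin 3 → ℝ)) ![a, b, c] s := by
    rw [hasDerivAt_pi]
    intro i
    fin_cases i <;> simpa
  exact (EuclideanSpace.equiv (Fin 3) ℝ).symm.toContinuousLinearMap.hasFDerivAt.comp_hasDerivAt s h

lemma er_t (t φ : ℝ) : HasDerivAt (fun t => er t φ) (et t φ) t :=
  hasDerivAt_V3 ((hasDerivAt_sin t).mul_const _) ((hasDerivAt_sin t).mul_const _)
    ((hasDerivAt_cos t).neg.congr_deriv (by simp))

lemma et_t (t φ : ℝ) : HasDerivAt (fun t => et t φ) (-er t φ) t := by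
  have := hasDerivAt_V3 ((hasDerivAt_cos t).mul_const (cos φ)) ((hasDerivAt_cos t).mul_const (sin φ))
    (hasDerivAt_sin t)
  refine this.congr_deriv ?_
  ext i; fin_cases i <;> simp [er]

lemma er_p (t φ : ℝ) : HasDerivAt (fun φ => er t φ) (sin t • ep φ) φ := by
  have := hasDerivAt_V3 ((hasDerivAt_cos φ).const_mul (sin t)) ((hasDerivAt_sin φ).const_mul (sin t))
    (hasDerivAt_const φ (-cos t))
  refine this.congr_deriv ?_
  ext i; fin_cases i <;> simp [ep]

lemma et_p (t φ : ℝ) : HasDerivAt (fun φ => et t φ) (cos t • ep φ) φ := by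
  have := hasDerivAt_V3 ((hasDerivAt_cos φ).const_mul (cos t)) ((hasDerivAt_sin φ).const_mul (cos t))
    (hasDerivAt_const φ (sin t))
  refine this.congr_deriv ?_
  ext i; fin_cases i <;> simp [ep]

lemma ep_p (φ : ℝ) : HasDerivAt ep (-en φ) φ := by
  have := hasDerivAt_V3 ((hasDerivAt_sin φ).neg) (hasDerivAt_cos φ) (hasDerivAt_const φ (0:ℝ))
  refine this.congr_deriv ?_
  ext i; fin_cases i <;> simp [en]

lemma en_p (φ : ℝ) : HasDerivAt en (ep φ) φ := 
  hasDerivAt_V3 (hasDerivAt_cos φ) (hasDerivAt_sin φ) (hasDerivAt_const φ (0:ℝ))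

lemma coordD {f : ℝ → V3} {f' : V3} {s : ℝ} (h : HasDerivAt f f' s) (i : Fin 3) :
    HasDerivAt (fun s => f s i) (f' i) s :=
  (EuclideanSpace.proj (𝕜 := ℝ) i).hasFDerivAt.comp_hasDerivAt s h

lemma en_eq (t φ : ℝ) : en φ = sin t • er t φ + cos t • et t φ := by
  have := sin_sq_add_cos_sq t
  ext i; fin_cases i
  · simp [en, er, et]; linear_combination (-cos φ) * this
  · simp [en, er, et]; linear_combination (-sin φ) * this
  · simp [en, er, et]; ring

lemma curve2 (f : V3 → ℝ) (c c1 : ℝ → V3) (c2 : V3) (s0 : ℝ) (hf : ContDiffAt ℝ 2 f (c s0))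
    (hc : ∀ᶠ s in 𝓝 s0, HasDerivAt c (c1 s) s) (hc1 : HasDerivAt c1 c2 s0)
    (G G1 : ℝ → ℝ) (G2 : ℝ) (hG : ∀ᶠ s in 𝓝 s0, f (c s) = G s)
    (hG1 : ∀ᶠ s in 𝓝 s0, HasDerivAt G (G1 s) s) (hG2 : HasDerivAt G1 G2 s0) :
    fderiv ℝ f (c s0) (c1 s0) = G1 s0 ∧
    fderiv ℝ (fderiv ℝ f) (c s0) (c1 s0) (c1 s0) + fderiv ℝ f (c s0) c2 = G2 := by
  have hcc : ContinuousAt c s0 := hc.self_of_nhds.continuousAt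
  have h1 : ∀ᶠ x in 𝓝 (c s0), ContDiffAt ℝ 2 f x := hf.eventually (by simp)
  have h2 : ∀ᶠ s in 𝓝 s0, ContDiffAt ℝ 2 f (c s) := hcc.eventually h1
  have key : ∀ᶠ s in 𝓝 s0, fderiv ℝ f (c s) (c1 s) = G1 s := by
    filter_upwards [h2, hc, hG.eventually_nhds, hG1] with s a b d e
    have d1 := ((a.differentiableAt (by norm_num)).hasFDerivAt).comp_hasDerivAt s b
    exact d1.unique (e.congr_of_eventuallyEq d)
  refine ⟨key.self_of_nhds, ?_⟩
  have hD : DifferentiableAt ℝ (fderiv ℝ f) (c s0) :=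
    (hf.fderiv_right (m := 1) (by norm_num)).differentiableAt (by norm_num)
  have d1 := (hD.hasFDerivAt.comp_hasDerivAt s0 hc.self_of_nhds).clm_apply hc1
  exact d1.unique (hG2.congr_of_eventuallyEq key)

lemma vec_expand (w : V3) : w = w 0 • e3 0 + w 1 • e3 1 + w 2 • e3 2 := by
  ext i; fin_cases i <;> simp [e3]

lemma lap_frame (f : V3 → ℝ) (x : V3) (hf : ContDiffAt ℝ 2 f x) (t φ : ℝ) :
    lap3 f x = fderiv ℝ (fderiv ℝ f) x (er t φ) (er t φ) + fderiv ℝ (fderiv ℝ f) x (et t φ) (et t φ)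
      + fderiv ℝ (fderiv ℝ f) x (ep φ) (ep φ) := by
  have hD : DifferentiableAt ℝ (fderiv ℝ f) x :=
    (hf.fderiv_right (m := 1) (by norm_num)).differentiableAt (by norm_num)
  have h1 : ∀ j, pd j (fun y => pd j f y) x = fderiv ℝ (fderiv ℝ f) x (e3 j) (e3 j) := by
    intro j
    have := (hD.hasFDerivAt.clm_apply (hasFDerivAt_const (e3 j) x)).fderiv
    simp only [pd]
    rw [this]; simp
  unfold lap3
  rw [Fin.sum_univ_three, h1, h1, h1]
  generalize fderiv ℝ (fderiv ℝ f) x = D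
  rw [vec_expand (er t φ), vec_expand (et t φ), vec_expand (ep φ)]
  have k1 := sin_sq_add_cos_sq t
  have k2 := sin_sq_add_cos_sq φ
  simp only [map_add, map_smul, add_apply, smul_apply, smul_eq_mul]
  simp [er, et, ep]
  linear_combination (-1) * (cos φ ^ 2 * D (e3 0) (e3 0) + cos φ * sin φ * (D (e3 0) (e3 1) + D (e3 1) (e3 0))
    + sin φ ^ 2 * D (e3 1) (e3 1) + D (e3 2) (e3 2)) * k1 - (D (e3 0) (e3 0) + D (e3 1) (e3 1)) * k2

lemma scalar_frame (f : V3 → ℝ) (t φ v : ℝ) (hs : 0 < sin t) (V V1 W W1 : ℝ → ℝ) (V2 W2 : ℝ)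
    (hf : ContDiffAt ℝ 2 f (er t φ))
    (hr : ∀ᶠ r in 𝓝 (1:ℝ), f (r • er t φ) = r⁻¹ * v)
    (hV : ∀ᶠ t' in 𝓝 t, f (er t' φ) = V t') (hV1 : ∀ᶠ t' in 𝓝 t, HasDerivAt V (V1 t') t')
    (hV2 : HasDerivAt V1 V2 t)
    (hW : ∀ᶠ φ' in 𝓝 φ, f (er t φ') = W φ') (hW1 : ∀ᶠ φ' in 𝓝 φ, HasDerivAt W (W1 φ') φ')
    (hW2 : HasDerivAt W1 W2 φ) :
    fderiv ℝ f (er t φ) (er t φ) = -v ∧ fderiv ℝ f (er t φ) (et t φ) = V1 t ∧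
    fderiv ℝ f (er t φ) (ep φ) = W1 φ / sin t ∧
    lap3 f (er t φ) = V2 + cos t / sin t * V1 t + W2 / sin t ^ 2 := by
  have k1 := curve2 f (fun r => r • er t φ) (fun _ => er t φ) 0 1 (by simpa using hf)
    (Eventually.of_forall fun r => by simpa using (hasDerivAt_id r).smul_const (er t φ))
    (hasDerivAt_const _ _) (fun r => r⁻¹ * v) (fun r => -(r^2)⁻¹ * v) (2 * v) hr
    (by
      filter_upwards [eventually_ne_nhds (one_ne_zero)] with r hr
      exact (hasDerivAt_inv hr).mul_const v)
    (by
      have := ((((hasDerivAt_id (1:ℝ)).pow 2).inv (by simp)).neg).mul_const v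
      refine this.congr_deriv ?_
      simp)
  have k2 := curve2 f (fun t => er t φ) (fun t => et t φ) _ t hf
    (Eventually.of_forall fun s => er_t s φ) (et_t t φ) V V1 V2 hV hV1 hV2
  have k3 := curve2 f (fun φ => er t φ) (fun φ => sin t • ep φ) _ φ hf
    (Eventually.of_forall fun s => er_p t s) ((ep_p φ).const_smul (sin t)) W W1 W2 hW hW1 hW2
  simp only [one_smul, map_zero, add_zero, en_eq t φ, map_smul, map_neg, map_add, smul_eq_mul, smul_apply] at k1 k2 k3
  obtain ⟨a1, a2⟩ := k1
  obtain ⟨b1, b2⟩ := k2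
  obtain ⟨c1, c2⟩ := k3
  rw [lap_frame f _ hf t φ]
  refine ⟨by rw [a1]; simp, b1, by rw [← c1]; field_simp, ?_⟩
  rw [a1, b1] at c2
  rw [a1] at b2
  rw [a2]
  generalize fderiv ℝ (fderiv ℝ f) (er t φ) = D at *
  have e2 : D (et t φ) (et t φ) = V2 - v := by norm_num at b2; linarith
  have e3 : D (ep φ) (ep φ) = (W2 + sin t * (sin t * (-v) + cos t * V1 t)) / sin t ^ 2 := by
    norm_num at c2
    rw [eq_div_iff (by positivity)]
    linear_combination c2
  rw [e2, e3]
  field_simp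
  ring

lemma frame_e3 (t φ : ℝ) (j : Fin 3) :
    e3 j = er t φ j • er t φ + et t φ j • et t φ + ep φ j • ep φ := by
  have k1 := sin_sq_add_cos_sq t
  have k2 := sin_sq_add_cos_sq φ
  have k3 : cos t ^ 2 = 1 - sin t ^ 2 := by linarith
  have k4 : cos φ ^ 2 = 1 - sin φ ^ 2 := by linarith
  ext i; fin_cases i <;> fin_cases j <;> simp [er, et, ep, e3] <;> ring_nf <;> (try rw [k3]) <;> (try rw [k4]) <;> ring

lemma orth (t φ : ℝ) :
    (er t φ 0 * er t φ 0 + er t φ 1 * er t φ 1 + er t φ 2 * er t φ 2 = 1) ∧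
    (et t φ 0 * et t φ 0 + et t φ 1 * et t φ 1 + et t φ 2 * et t φ 2 = 1) ∧
    (ep φ 0 * ep φ 0 + ep φ 1 * ep φ 1 + ep φ 2 * ep φ 2 = 1) ∧
    (er t φ 0 * et t φ 0 + er t φ 1 * et t φ 1 + er t φ 2 * et t φ 2 = 0) ∧
    (er t φ 0 * ep φ 0 + er t φ 1 * ep φ 1 + er t φ 2 * ep φ 2 = 0) ∧
    (et t φ 0 * ep φ 0 + et t φ 1 * ep φ 1 + et t φ 2 * ep φ 2 = 0) := by
  have k1 := sin_sq_add_cos_sq t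
  have k2 := sin_sq_add_cos_sq φ
  refine ⟨?_, ?_, ?_, ?_, ?_, ?_⟩ <;> simp [er, et, ep]
  · linear_combination sin t ^ 2 * k2 + k1
  · linear_combination cos t ^ 2 * k2 + k1
  · linear_combination k2
  · linear_combination (sin t * cos t) * k2
  · ring
  · ring

lemma pde_point (u : V3 → V3) (p : V3 → ℝ) (t φ : ℝ) (hs : 0 < sin t)
    (a a1 b b1 g g1 : ℝ → ℝ) (a2 b2 g2 : ℝ)
    (hu : ContDiffAt ℝ 2 u (er t φ)) (hp : DifferentiableAt ℝ p (er t φ))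
    (hrad : ∀ᶠ r in 𝓝 (1:ℝ), u (r • er t φ) = r⁻¹ • u (er t φ))
    (hprad : ∀ᶠ r in 𝓝 (1:ℝ), p (r • er t φ) = (r ^ 2)⁻¹ * p (er t φ))
    (hut : ∀ᶠ t' in 𝓝 t, ∀ φ, u (er t' φ) = a t' • er t' φ + b t' • et t' φ + g t' • ep φ)
    (ha : ∀ᶠ t' in 𝓝 t, HasDerivAt a (a1 t') t') (ha1 : HasDerivAt a1 a2 t)
    (hb : ∀ᶠ t' in 𝓝 t, HasDerivAt b (b1 t') t') (hb1 : HasDerivAt b1 b2 t)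
    (hg : ∀ᶠ t' in 𝓝 t, HasDerivAt g (g1 t') t') (hg1 : HasDerivAt g1 g2 t)
    (hNS : NSEq u p (er t φ)) :
    (sin t * a t + sin t * b1 t + cos t * b t = 0) ∧
    (-(a2 - 2 * b1 t - a t + cos t / sin t * (a1 t - b t)
      - (a t * sin t + b t * cos t) / sin t) + (- a t ^ 2 + b t * (a1 t - b t) - g t ^ 2)
      - 2 * p (er t φ) = 0) ∧
    (-(b2 + 2 * a1 t - b t + cos t / sin t * (b1 t + a t)
      - (a t * sin t + b t * cos t) * cos t / sin t ^ 2)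
      + (- a t * b t + b t * (b1 t + a t) - g t ^ 2 * cos t / sin t)
      + fderiv ℝ p (er t φ) (et t φ) = 0) ∧
    (-(g2 + cos t / sin t * g1 t - g t / sin t ^ 2)
      + (- a t * g t + b t * g1 t + g t * (a t * sin t + b t * cos t) / sin t)
      + fderiv ℝ p (er t φ) (ep φ) = 0) := by
  have hu0 := hut.self_of_nhds
  have F := fun i : Fin 3 => scalar_frame (fun z => u z i) t φ (u (er t φ) i) hs
    (fun t' => a t' * er t' φ i + b t' * et t' φ i + g t' * ep φ i)
    (fun t' => (a1 t' - b t') * er t' φ i + (b1 t' + a t') * et t' φ i + g1 t' * ep φ i)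
    (fun φ' => a t * er t φ' i + b t * et t φ' i + g t * ep φ' i)
    (fun φ' => (a t * sin t + b t * cos t) * ep φ' i - g t * en φ' i)
    ((a2 - 2 * b1 t - a t) * er t φ i + (b2 + 2 * a1 t - b t) * et t φ i + g2 * ep φ i)
    (-(a t * sin t + b t * cos t) * en φ i - g t * ep φ i)
    ((EuclideanSpace.proj (𝕜 := ℝ) i).contDiff.contDiffAt.comp _ hu)
    (by filter_upwards [hrad] with r hr; rw [hr]; simp)
    (by filter_upwards [hut] with s hs; rw [hs]; simp)
    (by
      filter_upwards [ha, hb, hg] with s a' b' g'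
      refine (((a'.mul (coordD (er_t s φ) i)).add (b'.mul (coordD (et_t s φ) i))).add
        (g'.mul_const (ep φ i))).congr_deriv ?_
      simp; ring)
    (by
      have a' := ha.self_of_nhds
      have b' := hb.self_of_nhds
      have g' := hg.self_of_nhds
      refine ((((ha1.sub b').mul (coordD (er_t t φ) i)).add ((hb1.add a').mul (coordD (et_t t φ) i))).add
        (hg1.mul_const (ep φ i))).congr_deriv ?_
      simp; ring)
    (Eventually.of_forall fun φ' => by simp only [hu0]; simp)
    (Eventually.of_forall fun φ' => by
      refine ((((coordD (er_p t φ') i).const_mul (a t)).add ((coordD (et_p t φ') i).const_mul (b t))).add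
        ((coordD (ep_p φ') i).const_mul (g t))).congr_deriv ?_
      simp; ring)
    (by
      refine (((coordD (ep_p φ) i).const_mul _).sub ((coordD (en_p φ) i).const_mul (g t))).congr_deriv ?_
      simp; ring)
  -- pressure
  have hpr : fderiv ℝ p (er t φ) (er t φ) = - 2 * p (er t φ) := by
    have hp' : DifferentiableAt ℝ p ((1:ℝ) • er t φ) := by simpa using hp
    have c : HasDerivAt (fun r : ℝ => r • er t φ) (er t φ) 1 := by
      simpa using (hasDerivAt_id (1:ℝ)).smul_const (er t φ)
    have d1 := hp'.hasFDerivAt.comp_hasDerivAt (1:ℝ) c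
    have d2 := (((hasDerivAt_id (1:ℝ)).pow 2).inv (by simp)).mul_const (p (er t φ))
    have := d1.unique (d2.congr_of_eventuallyEq hprad)
    rw [one_smul] at this
    rw [this]; simp
  obtain ⟨hM, hD⟩ := hNS
  have hv : ∀ i, u (er t φ) i = a t * er t φ i + b t * et t φ i + g t * ep φ i := by
    intro i; rw [hu0]; simp
  have hn : ∀ i, en φ i = sin t * er t φ i + cos t * et t φ i := by
    intro i; rw [en_eq t φ]; simp
  obtain ⟨o1, o2, o3, o4, o5, o6⟩ := orth t φ
  have hpd : ∀ (f : V3 → ℝ) j, pd j f (er t φ) = er t φ j * fderiv ℝ f (er t φ) (er t φ) +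
      et t φ j * fderiv ℝ f (er t φ) (et t φ) + ep φ j * fderiv ℝ f (er t φ) (ep φ) := by
    intro f j
    rw [pd]
    conv_lhs => rw [frame_e3 t φ j]
    simp
  constructor
  · rw [Fin.sum_univ_three] at hD
    simp only [hpd, (F _).1, (F _).2.1, (F _).2.2.1, hv, hn] at hD
    generalize er t φ 0 = X0 at *
    generalize er t φ 1 = X1 at *
    generalize er t φ 2 = X2 at *
    generalize et t φ 0 = Y0 at *
    generalize et t φ 1 = Y1 at *
    generalize et t φ 2 = Y2 at *
    generalize ep φ 0 = Z0 at *
    generalize ep φ 1 = Z1 at *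
    generalize ep φ 2 = Z2 at *
    field_simp at hD
    linear_combination hD + sin t * a t * o1 + sin t * b t * o4 + sin t * g t * o5 - sin t * (a1 t - b t) * o4
      - sin t * (b1 t + a t) * o2 - sin t * g1 t * o6 - (a t * sin t + b t * cos t) * o3
      + g t * sin t * o5 + g t * cos t * o6
  · have hM' : ∀ i, (-(a2 - 2 * b1 t - a t + cos t / sin t * (a1 t - b t)
      - (a t * sin t + b t * cos t) / sin t) + (- a t ^ 2 + b t * (a1 t - b t) - g t ^ 2)
      - 2 * p (er t φ)) * er t φ i + 
      (-(b2 + 2 * a1 t - b t + cos t / sin t * (b1 t + a t)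
      - (a t * sin t + b t * cos t) * cos t / sin t ^ 2)
      + (- a t * b t + b t * (b1 t + a t) - g t ^ 2 * cos t / sin t)
      + fderiv ℝ p (er t φ) (et t φ)) * et t φ i +
      (-(g2 + cos t / sin t * g1 t - g t / sin t ^ 2)
      + (- a t * g t + b t * g1 t + g t * (a t * sin t + b t * cos t) / sin t)
      + fderiv ℝ p (er t φ) (ep φ)) * ep φ i = 0 := by
      intro i
      have := hM i
      have hconv : ∑ j, u (er t φ) j * pd j (fun z => u z i) (er t φ) =
          a t * fderiv ℝ (fun z => u z i) (er t φ) (er t φ) + b t * fderiv ℝ (fun z => u z i) (er t φ) (et t φ)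
          + g t * fderiv ℝ (fun z => u z i) (er t φ) (ep φ) := by
        rw [Fin.sum_univ_three, hpd, hpd, hpd, hv, hv, hv]
        generalize fderiv ℝ (fun z => u z i) (er t φ) = D
        generalize er t φ 0 = X0 at *
        generalize er t φ 1 = X1 at *
        generalize er t φ 2 = X2 at *
        generalize et t φ 0 = Y0 at *
        generalize et t φ 1 = Y1 at *
        generalize et t φ 2 = Y2 at *
        generalize ep φ 0 = Z0 at *
        generalize ep φ 1 = Z1 at *
        generalize ep φ 2 = Z2 at *
        generalize D (er t φ) = A
        generalize D (et t φ) = B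
        generalize D (ep φ) = C
        linear_combination (a t * A) * o1 + (b t * B) * o2 + (g t * C) * o3 + (a t * B + b t * A) * o4
          + (a t * C + g t * A) * o5 + (b t * C + g t * B) * o6
      rw [hconv, (F i).1, (F i).2.1, (F i).2.2.1, (F i).2.2.2, hpd p i, hpr, hv, hn] at this
      rw [← this]
      field_simp
      ring
    have m0 := hM' 0
    have m1 := hM' 1
    have m2 := hM' 2
    generalize (-(a2 - 2 * b1 t - a t + cos t / sin t * (a1 t - b t)
      - (a t * sin t + b t * cos t) / sin t) + (- a t ^ 2 + b t * (a1 t - b t) - g t ^ 2)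
      - 2 * p (er t φ)) = R at *
    generalize (-(b2 + 2 * a1 t - b t + cos t / sin t * (b1 t + a t)
      - (a t * sin t + b t * cos t) * cos t / sin t ^ 2)
      + (- a t * b t + b t * (b1 t + a t) - g t ^ 2 * cos t / sin t)
      + fderiv ℝ p (er t φ) (et t φ)) = T at *
    generalize (-(g2 + cos t / sin t * g1 t - g t / sin t ^ 2)
      + (- a t * g t + b t * g1 t + g t * (a t * sin t + b t * cos t) / sin t)
      + fderiv ℝ p (er t φ) (ep φ)) = Q at *
    refine ⟨?_, ?_, ?_⟩
    · linear_combination er t φ 0 * m0 + er t φ 1 * m1 + er t φ 2 * m2 - R * o1 - T * o4 - Q * o5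
    · linear_combination et t φ 0 * m0 + et t φ 1 * m1 + et t φ 2 * m2 - R * o4 - T * o2 - Q * o6
    · linear_combination ep φ 0 * m0 + ep φ 1 * m1 + ep φ 2 * m2 - R * o5 - T * o6 - Q * o3

lemma norm_sq_V3 (x : V3) : ‖x‖ ^ 2 = x 0 ^ 2 + x 1 ^ 2 + x 2 ^ 2 := by
  rw [EuclideanSpace.norm_sq_eq, Fin.sum_univ_three]; simp

lemma norm_er (t φ : ℝ) : ‖er t φ‖ = 1 := by
  have h := norm_sq_V3 (er t φ)
  obtain ⟨o1, -⟩ := orth t φ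
  have : ‖er t φ‖ ^ 2 = 1 := by rw [h]; linarith
  nlinarith [norm_nonneg (er t φ)]

lemma rho_er {t φ : ℝ} (hs : 0 < sin t) : rho (er t φ) = sin t := by
  have k2 := sin_sq_add_cos_sq φ
  rw [rho, show (er t φ 0)^2 + (er t φ 1)^2 = sin t ^ 2 by
    simp [er]; linear_combination sin t ^ 2 * k2]
  exact sqrt_sq hs.le

lemma er_mem_cap {δ t φ : ℝ} (h0 : 0 < t) (h1 : t < min δ 1) : er t φ ∈ NSCap δ := by
  obtain ⟨hd, h1⟩ := lt_min_iff.1 h1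
  have hs : 0 < sin t := sin_pos_of_pos_of_lt_pi h0 (by linarith [pi_gt_three])
  refine ⟨⟨by simp [sphere2, norm_er], ?_⟩, ?_⟩
  · rw [mem_ball, dist_eq_norm]
    have h := norm_sq_V3 (er t φ - S3)
    have k1 := sin_sq_add_cos_sq t
    have k2 := sin_sq_add_cos_sq φ
    have h2 : ‖er t φ - S3‖ ^ 2 = 2 - 2 * cos t := by
      rw [h]; simp [er, S3]; linear_combination sin t ^ 2 * k2 + k1
    have h3 := one_sub_sq_div_two_le_cos (x := t)
    have h4 : ‖er t φ - S3‖ ^ 2 < δ ^ 2 := by nlinarith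
    exact lt_of_pow_lt_pow_left₀ 2 (by linarith) h4
  · intro h
    rw [Set.mem_singleton_iff] at h
    have := rho_er (φ := φ) hs
    rw [h] at this
    simp [rho, S3] at this
    linarith

lemma cone_of_cap {δ : ℝ} {x : V3} (hx : x ∈ NSCap δ) : x ∈ cone3 (NSCap δ) := by
  have h1 : ‖x‖ = 1 := by simpa [sphere2] using hx.1.1
  refine ⟨fun h => by simp [h] at h1, ?_⟩
  rw [h1]; simpa using hx

lemma cone_open (δ : ℝ) : IsOpen (cone3 (NSCap δ)) := by
  have : cone3 (NSCap δ) = {x : V3 | x ≠ 0} ∩ (fun x : V3 => ‖x‖⁻¹ • x) ⁻¹' (ball S3 δ ∩ {S3}ᶜ) := by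
    ext x
    simp only [cone3, NSCap, sphere2, Set.mem_setOf_eq, Set.mem_inter_iff, Set.mem_preimage,
      Set.mem_diff, Set.mem_compl_iff]
    constructor
    · rintro ⟨h, ⟨h1, h2⟩, h3⟩; exact ⟨h, h2, h3⟩
    · rintro ⟨h, h2, h3⟩
      refine ⟨h, ⟨?_, h2⟩, h3⟩
      rw [mem_sphere_zero_iff_norm, norm_smul, norm_inv, norm_norm]
      exact inv_mul_cancel₀ (norm_ne_zero_iff.2 h)
  rw [this]
  refine ContinuousOn.isOpen_inter_preimage ?_ isOpen_ne (isOpen_ball.inter isOpen_compl_singleton)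
  intro x hx
  exact ((continuous_norm.continuousAt.inv₀ (norm_ne_zero_iff.2 hx)).smul continuousAt_id).continuousWithinAt

lemma comp_er (u : V3 → V3) {t φ : ℝ} (hs : 0 < sin t) :
    uRc u (er t φ) = u (er t φ) 0 * er t φ 0 + u (er t φ) 1 * er t φ 1 + u (er t φ) 2 * er t φ 2 ∧
    uTc u (er t φ) = -(u (er t φ) 0 * et t φ 0 + u (er t φ) 1 * et t φ 1 + u (er t φ) 2 * et t φ 2) ∧
    uPc u (er t φ) = u (er t φ) 0 * ep φ 0 + u (er t φ) 1 * ep φ 1 + u (er t φ) 2 * ep φ 2 := by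
  refine ⟨?_, ?_, ?_⟩
  · rw [uRc, norm_er, div_one]
  · rw [uTc, norm_er, rho_er hs]
    generalize u (er t φ) = w
    simp [er, et]; field_simp; ring
  · rw [uPc, rho_er hs]
    generalize u (er t φ) = w
    simp [er, ep]; field_simp

lemma recon (w : V3) (t φ : ℝ) :
    w = (w 0 * er t φ 0 + w 1 * er t φ 1 + w 2 * er t φ 2) • er t φ
      + (w 0 * et t φ 0 + w 1 * et t φ 1 + w 2 * et t φ 2) • et t φ
      + (w 0 * ep φ 0 + w 1 * ep φ 1 + w 2 * ep φ 2) • ep φ := by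
  conv_lhs => rw [vec_expand w, frame_e3 t φ 0, frame_e3 t φ 1, frame_e3 t φ 2]
  module

lemma c2_derivs {a : ℝ → ℝ} {t : ℝ} (h : ContDiffAt ℝ 2 a t) :
    HasDerivAt a (deriv a t) t ∧ HasDerivAt (deriv a) (deriv (deriv a) t) t := by
  refine ⟨(h.differentiableAt (by norm_num)).hasDerivAt, ?_⟩
  have hD : DifferentiableAt ℝ (fderiv ℝ a) t :=
    (h.fderiv_right (m := 1) (by norm_num)).differentiableAt (by norm_num)
  have : DifferentiableAt ℝ (deriv a) t := hD.clm_apply (differentiableAt_const (1:ℝ))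
  exact this.hasDerivAt

lemma contDiff_er0 (i : Fin 3) : ContDiff ℝ 2 (fun t => er t 0 i) := by
  fin_cases i <;> simp [er] <;> fun_prop

lemma contDiff_et0 (i : Fin 3) : ContDiff ℝ 2 (fun t => et t 0 i) := by
  fin_cases i <;> simp [et] <;> fun_prop

lemma er_cont : Tendsto (fun t => er t 0) (𝓝[>] 0) (𝓝[sphere2 \ {S3}] S3) := by
  rw [tendsto_nhdsWithin_iff]
  constructor
  · have h : ContinuousAt (fun t => er t 0) 0 := (er_t 0 0).continuousAt
    have e : er 0 0 = S3 := by
      ext i; fin_cases i <;> simp [er, S3]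
    have := h.tendsto
    simp only [e] at this
    exact this.mono_left nhdsWithin_le_nhds
  · exact ev_of one_pos fun t h0 h1 => by
      have := er_mem_cap (δ := 1) (φ := 0) h0 (by simpa using h1)
      exact ⟨this.1.1, this.2⟩


/-- expansion when `τ < 2`, `τ ≠ 0`. -/
theorem expansion_tau_lt_two_ne_zero (δ : ℝ) (hδ : 0 < δ) (u : V3 → V3) (p : V3 → ℝ)
    (hu_hom : ∀ x ∈ cone3 (NSCap δ), ∀ lam : ℝ, 0 < lam → u (lam • x) = lam⁻¹ • u x)
    (hp_hom : ∀ x ∈ cone3 (NSCap δ), ∀ lam : ℝ, 0 < lam → p (lam • x) = (lam ^ 2)⁻¹ * p x)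
    (hu_reg : ContDiffOn ℝ 2 u (cone3 (NSCap δ)))
    (hp_reg : ContDiffOn ℝ 1 p (cone3 (NSCap δ)))
    (haxi : AxisymOn u (cone3 (NSCap δ)))
    (hNS : ∀ x ∈ cone3 (NSCap δ), NSEq u p x)
    (τ : ℝ) (hτ : Tendsto (fun x => rho x * uTc u x) (𝓝[sphere2 \ {S3}] S3) (𝓝 τ))
    (hτl : τ < 2) (hτ0 : τ ≠ 0) :
    (∃ L1 : ℝ, Tendsto (fun x => rho x * uPc u x) (𝓝[sphere2 \ {S3}] S3) (𝓝 L1)) ∧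
    (∃ L2 : ℝ, Tendsto (fun x => rho x ^ (max τ 0) * uRc u x)
      (𝓝[sphere2 \ {S3}] S3) (𝓝 L2)) := by

  classical
  set ε := min δ 1 with hε
  have hε0 : 0 < ε := lt_min hδ one_pos
  have hε1 : ε ≤ 1 := min_le_right _ _
  have hΩ := cone_open δ
  have hs : ∀ t, 0 < t → t < ε → 0 < sin t := fun t h0 h1 =>
    sin_pos_of_pos_of_lt_pi h0 (by linarith [pi_gt_three])
  have hmem : ∀ t, 0 < t → t < ε → ∀ φ, er t φ ∈ cone3 (NSCap δ) := fun t h0 h1 φ =>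
    cone_of_cap (er_mem_cap h0 h1)
  set a : ℝ → ℝ := fun t => u (er t 0) 0 * er t 0 0 + u (er t 0) 1 * er t 0 1 + u (er t 0) 2 * er t 0 2 with ha
  set b : ℝ → ℝ := fun t => u (er t 0) 0 * et t 0 0 + u (er t 0) 1 * et t 0 1 + u (er t 0) 2 * et t 0 2 with hb
  set g : ℝ → ℝ := fun t => u (er t 0) 0 * ep 0 0 + u (er t 0) 1 * ep 0 1 + u (er t 0) 2 * ep 0 2 with hg
  have hut : ∀ t, 0 < t → t < ε → ∀ φ, u (er t φ) = a t • er t φ + b t • et t φ + g t • ep φ := by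
    intro t h0 h1 φ
    have hst := hs t h0 h1
    obtain ⟨c1, c2, c3⟩ := comp_er u (φ := φ) hst
    obtain ⟨d1, d2, d3⟩ := comp_er u (φ := 0) hst
    obtain ⟨x1, x2, x3⟩ := haxi _ (hmem t h0 h1 φ) _ (hmem t h0 h1 0) (by rw [norm_er, norm_er]) (by simp [er])
    have y1 : a t = _ := (x1.trans d1).symm.trans c1
    have y2 : b t = _ := neg_injective ((x2.trans d2).symm.trans c2)
    have y3 : g t = _ := (x3.trans d3).symm.trans c3
    rw [y1, y2, y3]
    exact recon _ t φ
  have hue : ∀ t, 0 < t → t < ε → ∀ φ, ContDiffAt ℝ 2 u (er t φ) := fun t h0 h1 φ =>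
    hu_reg.contDiffAt (hΩ.mem_nhds (hmem t h0 h1 φ))
  have hpe : ∀ t, 0 < t → t < ε → ∀ φ, DifferentiableAt ℝ p (er t φ) := fun t h0 h1 φ =>
    (hp_reg.contDiffAt (hΩ.mem_nhds (hmem t h0 h1 φ))).differentiableAt (by norm_num)
  have hui : ∀ t, 0 < t → t < ε → ∀ i : Fin 3, ContDiffAt ℝ 2 (fun t => u (er t 0) i) t := by
    intro t h0 h1 i
    have h3 : ContDiffAt ℝ 2 (fun t => er t 0) t := by
      rw [contDiffAt_piLp]
      exact fun i => (contDiff_er0 i).contDiffAt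
    exact (EuclideanSpace.proj (𝕜 := ℝ) i).contDiff.contDiffAt.comp t ((hue t h0 h1 0).comp t h3)
  have hac : ∀ t, 0 < t → t < ε → ContDiffAt ℝ 2 a t := fun t h0 h1 =>
    (((hui t h0 h1 0).mul (contDiff_er0 0).contDiffAt).add ((hui t h0 h1 1).mul (contDiff_er0 1).contDiffAt)).add
      ((hui t h0 h1 2).mul (contDiff_er0 2).contDiffAt)
  have hbc : ∀ t, 0 < t → t < ε → ContDiffAt ℝ 2 b t := fun t h0 h1 =>
    (((hui t h0 h1 0).mul (contDiff_et0 0).contDiffAt).add ((hui t h0 h1 1).mul (contDiff_et0 1).contDiffAt)).add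
      ((hui t h0 h1 2).mul (contDiff_et0 2).contDiffAt)
  have hgc : ∀ t, 0 < t → t < ε → ContDiffAt ℝ 2 g t := fun t h0 h1 =>
    (((hui t h0 h1 0).mul contDiffAt_const).add ((hui t h0 h1 1).mul contDiffAt_const)).add
      ((hui t h0 h1 2).mul contDiffAt_const)
  have ev : ∀ {Q : ℝ → Prop}, (∀ t, 0 < t → t < ε → Q t) → ∀ t, 0 < t → t < ε → ∀ᶠ t' in 𝓝 t, Q t' := by
    intro Q hQ t h0 h1
    filter_upwards [Ioo_mem_nhds h0 h1] with x hx using hQ x hx.1 hx.2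
  have M := fun t h0 h1 φ => pde_point u p t φ (hs t h0 h1) a (deriv a) b (deriv b) g (deriv g)
    (deriv (deriv a) t) (deriv (deriv b) t) (deriv (deriv g) t) (hue t h0 h1 φ) (hpe t h0 h1 φ)
    (by
      filter_upwards [eventually_gt_nhds one_pos] with r hr using hu_hom _ (hmem t h0 h1 φ) r hr)
    (by
      filter_upwards [eventually_gt_nhds one_pos] with r hr using hp_hom _ (hmem t h0 h1 φ) r hr)
    (ev hut t h0 h1)
    (ev (fun t h0 h1 => (c2_derivs (hac t h0 h1)).1) t h0 h1) (c2_derivs (hac t h0 h1)).2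
    (ev (fun t h0 h1 => (c2_derivs (hbc t h0 h1)).1) t h0 h1) (c2_derivs (hbc t h0 h1)).2
    (ev (fun t h0 h1 => (c2_derivs (hgc t h0 h1)).1) t h0 h1) (c2_derivs (hgc t h0 h1)).2
    (hNS _ (hmem t h0 h1 φ))
  have hpφ : ∀ t, 0 < t → t < ε → fderiv ℝ p (er t 0) (ep 0) = 0 := by
    intro t h0 h1
    have hc : ∀ φ, p (er t φ) = p (er t 0) := fun φ => by
      have e1 := (M t h0 h1 φ).2.1
      have e2 := (M t h0 h1 0).2.1
      linarith
    have d1 := (hpe t h0 h1 0).hasFDerivAt.comp_hasDerivAt (0:ℝ) (er_p t 0)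
    have d2 : HasDerivAt (p ∘ fun φ => er t φ) 0 0 := by
      have : (p ∘ fun φ => er t φ) = fun _ => p (er t 0) := funext hc
      rw [this]; exact hasDerivAt_const _ _
    have := d1.unique d2
    rw [map_smul, smul_eq_mul] at this
    exact (mul_eq_zero.1 this).resolve_left (hs t h0 h1).ne'
  have hB : Tendsto (fun t => sin t * b t) (𝓝[>] 0) (𝓝 (-τ)) := by
    have := (hτ.comp er_cont).neg
    refine this.congr' (ev_of hε0 fun t h0 h1 => ?_)
    simp only [Function.comp]
    rw [rho_er (hs t h0 h1), (comp_er u (φ := 0) (hs t h0 h1)).2.1]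
    ring
  obtain ⟨⟨L1, hL1⟩, ⟨L2, hL2⟩⟩ := ode_asymp a (deriv a) (fun t => deriv (deriv a) t) b (deriv b)
    (fun t => deriv (deriv b) t) g (deriv g) (fun t => deriv (deriv g) t) (fun t => p (er t 0))
    (fun t => fderiv ℝ p (er t 0) (et t 0)) τ ε hε0 hε1 hτl hτ0
    (fun t h0 h1 => (c2_derivs (hac t h0 h1)).1) (fun t h0 h1 => (c2_derivs (hac t h0 h1)).2)
    (fun t h0 h1 => (c2_derivs (hbc t h0 h1)).1) (fun t h0 h1 => (c2_derivs (hbc t h0 h1)).2)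
    (fun t h0 h1 => (c2_derivs (hgc t h0 h1)).1) (fun t h0 h1 => (c2_derivs (hgc t h0 h1)).2)
    (fun t h0 h1 => (hpe t h0 h1 0).hasFDerivAt.comp_hasDerivAt t (er_t t 0))
    (fun t h0 h1 => (M t h0 h1 0).1)
    (fun t h0 h1 => (M t h0 h1 0).2.1)
    (fun t h0 h1 => (M t h0 h1 0).2.2.1)
    (fun t h0 h1 => by
      have := (M t h0 h1 0).2.2.2
      rw [hpφ t h0 h1, add_zero] at this
      exact this) hB
  -- transfer back
  have hx1 : ∀ᶠ x in 𝓝[sphere2 \ {S3}] S3, x ∈ sphere2 \ {S3} := eventually_mem_nhdsWithin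
  have hpos : ∀ x ∈ sphere2 \ {S3}, 0 < arccos (-x 2) := by
    rintro x ⟨h1, h2⟩
    rw [arccos_pos]
    have n1 : ‖x‖ = 1 := by simpa [sphere2] using h1
    have n2 := norm_sq_V3 x
    rw [n1] at n2
    by_contra hcon
    apply h2
    have e0 : x 0 = 0 := by nlinarith [sq_nonneg (x 0), sq_nonneg (x 1)]
    have e1 : x 1 = 0 := by nlinarith [sq_nonneg (x 0), sq_nonneg (x 1)]
    have e2 : x 2 = -1 := by rw [e0, e1] at n2; nlinarith
    rw [Set.mem_singleton_iff]
    ext i; fin_cases i <;> simp [S3, e0, e1, e2]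
  have hT : Tendsto (fun x : V3 => arccos (-x 2)) (𝓝[sphere2 \ {S3}] S3) (𝓝[>] 0) := by
    rw [tendsto_nhdsWithin_iff]
    constructor
    · have hc : Continuous (fun x : V3 => arccos (-x 2)) := by fun_prop
      have := hc.tendsto S3
      simp [S3] at this
      exact (by simpa [S3] using this : Tendsto _ (𝓝 S3) _).mono_left nhdsWithin_le_nhds
    · filter_upwards [hx1] with x hx using hpos x hx
  have hrel : ∀ᶠ x in 𝓝[sphere2 \ {S3}] S3, rho x = sin (arccos (-x 2)) ∧
      uPc u x = g (arccos (-x 2)) ∧ uRc u x = a (arccos (-x 2)) := by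
    have hball : ∀ᶠ x in 𝓝[sphere2 \ {S3}] S3, x ∈ ball S3 δ :=
      nhdsWithin_le_nhds (ball_mem_nhds _ hδ)
    have hsm : ∀ᶠ x in 𝓝[sphere2 \ {S3}] S3, arccos (-x 2) < ε :=
      (hT.eventually (ev_of hε0 fun t _ h1 => h1))
    filter_upwards [hx1, hball, hsm] with x hx hxb hxe
    have h0 := hpos x hx
    have n1 : ‖x‖ = 1 := by simpa [sphere2] using hx.1
    have n2 := norm_sq_V3 x
    rw [n1] at n2
    have hcos : cos (arccos (-x 2)) = - x 2 := by
      apply cos_arccos <;> nlinarith [sq_nonneg (x 0), sq_nonneg (x 1)]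
    obtain ⟨z1, z2, z3⟩ := haxi x (cone_of_cap ⟨⟨hx.1, hxb⟩, hx.2⟩) _ (hmem _ h0 hxe 0)
      (by rw [n1, norm_er]) (by simp [er, hcos])
    obtain ⟨d1, d2, d3⟩ := comp_er u (φ := 0) (hs _ h0 hxe)
    refine ⟨?_, z3.trans d3, z1.trans d1⟩
    rw [sin_arccos, rho]
    congr 1
    linarith
  refine ⟨⟨L1, (hL1.comp hT).congr' ?_⟩, ⟨L2, (hL2.comp hT).congr' ?_⟩⟩
  · filter_upwards [hrel] with x hx
    obtain ⟨h1, h2, h3⟩ := hx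
    simp only [Function.comp]
    rw [h1, h2]
  · filter_upwards [hrel] with x hx
    obtain ⟨h1, h2, h3⟩ := hx
    simp only [Function.comp]
    rw [h1, h3]
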